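/- arXiv:2111.15226 — 3 statements merged into one kernel-verified Lean document; each statement's English description precedes it below -/
import Mathlib

section
/- Let B be a complete atomic Boolean algebra and let caΣ_B denote the set of completely additive two-valued homomorphisms of B. Then the map α_B : B → Set(caΣ_B) defined by α_B(b) := {λ ∈ caΣ_B | λ(b)} is a bijection from B onto the full power set of caΣ_B. -/
/-!
A homomorphism `l` to `Prop` that preserves arbitrary infima is true at the meet of all elements
where it is true, so it is the homomorphism `b ↦ (a ≤ b)` for that least element `a`. In a Boolean
algebra `l` is true at `c` or at `cᶜ`, which forces `a` to be an atom. Hence two-valued complete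
homomorphisms correspond to atoms, and `α_B` becomes the map sending an element to the set of atoms
below it, which is a bijection when `B` is complete and atomic.
-/

theorem map_sInf_iff_forall_mem {F B : Type*} [InfSet B] [FunLike F B Prop] [sInfHomClass F B Prop]
    (l : F) (s : Set B) : l (sInf s) ↔ ∀ b ∈ s, l b := by
  rw [map_sInf, sInf_image, iInf_Prop_eq]
  simp only [iInf_Prop_eq]

/-- The least element at which a `Prop`-valued map preserving arbitrary infima is true, i.e. the
generator of the principal filter `{b | l b}`. -/
def leastTrue {F B : Type*} [InfSet B] [FunLike F B Prop] (l : F) : B :=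
  sInf {b | l b}

theorem leastTrue_le_iff {F B : Type*} [CompleteLattice B] [FunLike F B Prop]
    [sInfHomClass F B Prop] (l : F) {b : B} : leastTrue l ≤ b ↔ l b := by
  have true_at_leastTrue : l (leastTrue l) := (map_sInf_iff_forall_mem l _).2 fun _ hb => hb
  exact ⟨fun hle => OrderHomClass.mono l hle true_at_leastTrue, fun hb => sInf_le hb⟩

theorem isAtom_leastTrue {F B : Type*} [CompleteBooleanAlgebra B] [FunLike F B Prop]
    [sInfHomClass F B Prop] [BoundedLatticeHomClass F B Prop] (l : F) :
    IsAtom (leastTrue l : B) := by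
  refine ⟨fun h => ?_, fun c hc => ?_⟩
  · have true_at_bot : l ⊥ := (leastTrue_le_iff l).1 h.le
    rwa [map_bot] at true_at_bot
  · have false_at_c : ¬ l c := fun h => hc.not_ge ((leastTrue_le_iff l).2 h)
    have true_at_compl : l cᶜ := by rwa [map_compl']
    exact le_compl_self.1 (hc.le.trans ((leastTrue_le_iff l).2 true_at_compl))

/-- The two-valued complete homomorphism `b ↦ (a ≤ b)` attached to an atom `a`. It preserves
suprema because in a frame an atom below a supremum lies below one of its members. -/
def atomHom {B : Type*} [Order.Frame B] (a : B) (ha : IsAtom a) : CompleteLatticeHom B Prop where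
  toFun b := a ≤ b
  map_sInf' s := by simp only [le_sInf_iff, sInf_image, iInf_Prop_eq]
  map_sSup' s := by simp only [ha.le_sSup, sSup_image, iSup_Prop_eq, exists_prop]

theorem leastTrue_atomHom {B : Type*} [Order.Frame B] {a : B} (ha : IsAtom a) :
    leastTrue (atomHom a ha) = a :=
  eq_of_forall_ge_iff fun _ => leastTrue_le_iff (atomHom a ha)

theorem atomHom_leastTrue {B : Type*} [CompleteBooleanAlgebra B] (l : CompleteLatticeHom B Prop) :
    atomHom (leastTrue l) (isAtom_leastTrue l) = l :=
  DFunLike.ext _ _ fun _ => propext (leastTrue_le_iff l)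

/-- The correspondence between two-valued complete homomorphisms and atoms, sending a homomorphism
to the least element at which it is true. -/
def homEquivAtom (B : Type*) [CompleteBooleanAlgebra B] :
    CompleteLatticeHom B Prop ≃ {a : B // IsAtom a} where
  toFun l := ⟨leastTrue l, isAtom_leastTrue l⟩
  invFun a := atomHom a a.2
  left_inv := atomHom_leastTrue
  right_inv a := Subtype.ext (leastTrue_atomHom a.2)

/-- The map `α_B : B → Set (caΣ_B)`, `α_B(b) := {λ | λ(b)}`, is a bijection from
a complete atomic Boolean algebra `B` onto the full power set of the set of
completely additive two-valued homomorphisms of `B`. -/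
theorem alpha_bijective {B : Type*} [CompleteAtomicBooleanAlgebra B] :
    Function.Bijective (fun b : B => {l : CompleteLatticeHom B Prop | l b}) := by
  have alpha_eq : (fun b : B => {l : CompleteLatticeHom B Prop | l b}) =
      Set.preimage (homEquivAtom B) ∘ CompleteAtomicBooleanAlgebra.toSetOfIsAtom := by
    ext b l
    exact (leastTrue_le_iff l).symm
  rw [alpha_eq]
  have preimage_bijective : Function.Bijective (Set.preimage (homEquivAtom B)) :=
    ⟨Set.preimage_injective.2 (homEquivAtom B).surjective,
      Set.preimage_surjective.2 (homEquivAtom B).injective⟩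
  exact preimage_bijective.comp CompleteAtomicBooleanAlgebra.toSetOfIsAtom.bijective
end

section
/- Let L be a complete lattice and let B', B be subsets of L with B' ⊆ B, such that both B and B' are closed under sInf and sSup of arbitrary subsets, and such that B is atomistic: every b ∈ B satisfies b = sSup {a | a is an atom of B and a ≤ b}, where an atom of B is an element a ∈ B with a ≠ ⊥ such that every y ∈ B with y < a equals ⊥. Then for every x ∈ L, δ_{B'}(x) = sSup {δ_{B'}(a) | a is an atom of B and a ≤ δ_B(x)}. -/
/-- The daseinisation of `x` to a subset `B` of a complete lattice:
`δ_B(x) := sInf {y ∈ B | x ≤ y}`. -/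
def das {L : Type*} [CompleteLattice L] (B : Set L) (x : L) : L :=
  sInf {y ∈ B | x ≤ y}

/-- `a` is an atom of the subset `C`: `a ∈ C`, `a ≠ ⊥`, and every element of `C`
strictly below `a` is `⊥`. -/
def IsAtomOf {L : Type*} [CompleteLattice L] (C : Set L) (a : L) : Prop :=
  a ∈ C ∧ a ≠ ⊥ ∧ ∀ y ∈ C, y < a → y = ⊥

/-! Corestricted to a closed `C`, the map `das C` is left adjoint to the inclusion of `C` in `L`.
It therefore preserves suprema, which `C` inherits from `L`. Moreover, it factors through `das B`
when `C ⊆ B`, so `das C x` can be computed on any decomposition of `das B x` as a supremum. -/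

section Daseinisation

variable {L : Type*} [CompleteLattice L] {B B' : Set L} {x y : L}

theorem le_das : x ≤ das B x :=
  le_sInf fun _ hy => hy.2

theorem das_le_iff (hy : y ∈ B) : das B x ≤ y ↔ x ≤ y :=
  ⟨le_das.trans, fun hxy => sInf_le ⟨hy, hxy⟩⟩

theorem das_mono : Monotone (das B) :=
  fun _ _ hxy => sInf_le_sInf fun _ hz => ⟨hz.1, hxy.trans hz.2⟩

theorem das_mem (hInf : ∀ S ⊆ B, sInf S ∈ B) (x : L) : das B x ∈ B :=
  hInf _ fun _ hy => hy.1

theorem das_das_of_subset (hsub : B' ⊆ B) (x : L) : das B' (das B x) = das B' x :=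
  le_antisymm
    (le_sInf fun _ hy => sInf_le ⟨hy.1, (das_le_iff (hsub hy.1)).2 hy.2⟩)
    (das_mono le_das)

theorem das_sSup (hInf : ∀ S ⊆ B, sInf S ∈ B) (hSup : ∀ S ⊆ B, sSup S ∈ B) (S : Set L) :
    das B (sSup S) = sSup (das B '' S) := by
  have image_subset : das B '' S ⊆ B := Set.image_subset_iff.2 fun a _ => das_mem hInf a
  apply le_antisymm
  · rw [das_le_iff (hSup _ image_subset)]
    exact sSup_le fun a ha => le_das.trans (le_sSup (Set.mem_image_of_mem _ ha))
  · exact sSup_le (Set.forall_mem_image.2 fun a ha => das_mono (le_sSup ha))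

theorem das_eq_sSup_das_atoms_general (hsub : B' ⊆ B) (hInfB : ∀ S ⊆ B, sInf S ∈ B)
    (hInfB' : ∀ S ⊆ B', sInf S ∈ B') (hSupB' : ∀ S ⊆ B', sSup S ∈ B')
    {A : Set L} (hA : ∀ b ∈ B, b = sSup {a ∈ A | a ≤ b}) (x : L) :
    das B' x = sSup (das B' '' {a ∈ A | a ≤ das B x}) :=
  calc
    das B' x = das B' (das B x) := (das_das_of_subset hsub x).symm
    _ = das B' (sSup {a ∈ A | a ≤ das B x}) := congrArg (das B') (hA _ (das_mem hInfB x))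
    _ = sSup (das B' '' {a ∈ A | a ≤ das B x}) := das_sSup hInfB' hSupB' _

end Daseinisation

/-- If `B' ⊆ B` are closed under arbitrary `sInf` and `sSup` and `B` is atomistic,
then `δ_{B'}(x)` is the supremum of `δ_{B'}(a)` over the atoms `a` of `B` below `δ_B(x)`. -/
theorem das_eq_sSup_das_atoms {L : Type*} [CompleteLattice L] (B' B : Set L) (hsub : B' ⊆ B)
    (hInfB : ∀ S ⊆ B, sInf S ∈ B) (hSupB : ∀ S ⊆ B, sSup S ∈ B)
    (hInfB' : ∀ S ⊆ B', sInf S ∈ B') (hSupB' : ∀ S ⊆ B', sSup S ∈ B')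
    (hatomistic : ∀ b ∈ B, b = sSup {a | IsAtomOf B a ∧ a ≤ b})
    (x : L) :
    das B' x = sSup {z | ∃ a, IsAtomOf B a ∧ a ≤ das B x ∧ z = das B' a} := by
  simpa only [Set.image, Set.mem_ofPred_eq, and_assoc, eq_comm] using
    das_eq_sSup_das_atoms_general hsub hInfB hInfB' hSupB' (A := {a | IsAtomOf B a}) hatomistic x
end

section
/- Let L be a complete orthomodular lattice and let u, v ∈ L satisfy ⊥ < u, u ⊔ v < ⊤, and v ≰ u. Set v' := uᗮ ⊓ (u ⊔ v) and B := {⊥, u ⊔ v, (u ⊔ v)ᗮ, ⊤}. Then u ⊔ v' = u ⊔ v, u ⊓ v' = ⊥, δ_B(u) = u ⊔ v, δ_B(v') = u ⊔ v, and δ_B(u ⊓ v') = ⊥; in particular δ_B(u) ⊓ δ_B(v') ≠ δ_B(u ⊓ v'). -/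
/-! The only element of `B` other than `⊤` that lies above a nonzero `x ≤ u ⊔ v` is `u ⊔ v` itself,
so `u` and `v'` are both sent to `u ⊔ v`, while their meet `⊥` is fixed. Orthomodularity enters
through `u ⊔ v' = u ⊔ v`, which forces `v' ≠ ⊥`. -/

section Daseinisation

variable {L : Type*} [CompleteLattice L]

theorem das_eq_of_isLeast {B : Set L} {x y : L} (h : IsLeast {z ∈ B | x ≤ z} y) :
    das B x = y :=
  h.isGLB.sInf_eq

theorem das_eq_self_of_mem {B : Set L} {x : L} (hx : x ∈ B) : das B x = x :=
  das_eq_of_isLeast ⟨⟨hx, le_rfl⟩, fun _ hz ↦ hz.2⟩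

theorem das_eq_of_le_of_disjoint {w w' x : L} (hw : Disjoint w w') (hx : x ≠ ⊥) (hxw : x ≤ w) :
    das {⊥, w, w', ⊤} x = w := by
  refine das_eq_of_isLeast ⟨⟨by simp, hxw⟩, ?_⟩
  rintro z ⟨rfl | rfl | rfl | rfl, hxz⟩
  · exact absurd (le_bot_iff.mp hxz) hx
  · exact le_rfl
  · exact absurd (le_bot_iff.mp (hw hxw hxz)) hx
  · exact le_top

end Daseinisation

/-- Besides orthocomplementations, `oc` may be any choice of complements in a complemented
modular lattice. -/
theorem das_not_preserve_inf_example_general {L : Type*} [CompleteLattice L] (oc : L → L)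
    (h_inf : ∀ x : L, x ⊓ oc x = ⊥)
    (h_om : ∀ x y : L, x ≤ y → y = x ⊔ (y ⊓ oc x))
    (u v : L) (hu : ⊥ < u) (hvu : ¬ v ≤ u) :
    u ⊔ (oc u ⊓ (u ⊔ v)) = u ⊔ v ∧
    u ⊓ (oc u ⊓ (u ⊔ v)) = ⊥ ∧
    das {⊥, u ⊔ v, oc (u ⊔ v), ⊤} u = u ⊔ v ∧
    das {⊥, u ⊔ v, oc (u ⊔ v), ⊤} (oc u ⊓ (u ⊔ v)) = u ⊔ v ∧
    das {⊥, u ⊔ v, oc (u ⊔ v), ⊤} (u ⊓ (oc u ⊓ (u ⊔ v))) = ⊥ ∧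
    das {⊥, u ⊔ v, oc (u ⊔ v), ⊤} u ⊓ das {⊥, u ⊔ v, oc (u ⊔ v), ⊤} (oc u ⊓ (u ⊔ v)) ≠
      das {⊥, u ⊔ v, oc (u ⊔ v), ⊤} (u ⊓ (oc u ⊓ (u ⊔ v))) := by
  have sup_eq : u ⊔ (oc u ⊓ (u ⊔ v)) = u ⊔ v := by
    rw [inf_comm, ← h_om u (u ⊔ v) le_sup_left]
  have inf_eq : u ⊓ (oc u ⊓ (u ⊔ v)) = ⊥ := by
    rw [← inf_assoc, h_inf, bot_inf_eq]
  have v'_ne_bot : oc u ⊓ (u ⊔ v) ≠ ⊥ := fun h ↦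
    hvu (sup_eq_left.mp (by rw [← sup_eq, h, sup_bot_eq]))
  have disj : Disjoint (u ⊔ v) (oc (u ⊔ v)) := disjoint_iff.mpr (h_inf _)
  have das_u := das_eq_of_le_of_disjoint disj hu.ne' le_sup_left
  have das_v' := das_eq_of_le_of_disjoint disj v'_ne_bot inf_le_right
  have das_inf : das {⊥, u ⊔ v, oc (u ⊔ v), ⊤} (u ⊓ (oc u ⊓ (u ⊔ v))) = ⊥ := by
    rw [inf_eq, das_eq_self_of_mem (Set.mem_insert _ _)]
  refine ⟨sup_eq, inf_eq, das_u, das_v', das_inf, ?_⟩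
  rw [das_u, das_v', das_inf, inf_idem]
  exact (hu.trans_le le_sup_left).ne'

/-- In a complete orthomodular lattice, for `⊥ < u`, `u ⊔ v < ⊤`, `v ≰ u`, setting
`v' := uᗮ ⊓ (u ⊔ v)` and `B := {⊥, u ⊔ v, (u ⊔ v)ᗮ, ⊤}`, daseinisation to `B`
fails to preserve the meet of `u` and `v'`. -/
theorem das_not_preserve_inf_example {L : Type*} [CompleteLattice L] (oc : L → L)
    (h_inf : ∀ x : L, x ⊓ oc x = ⊥) (h_sup : ∀ x : L, x ⊔ oc x = ⊤)
    (h_anti : ∀ x y : L, x ≤ y → oc y ≤ oc x) (h_inv : ∀ x : L, oc (oc x) = x)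
    (h_om : ∀ x y : L, x ≤ y → y = x ⊔ (y ⊓ oc x))
    (u v : L) (hu : ⊥ < u) (huv : u ⊔ v < ⊤) (hvu : ¬ v ≤ u) :
    u ⊔ (oc u ⊓ (u ⊔ v)) = u ⊔ v ∧
    u ⊓ (oc u ⊓ (u ⊔ v)) = ⊥ ∧
    das {⊥, u ⊔ v, oc (u ⊔ v), ⊤} u = u ⊔ v ∧
    das {⊥, u ⊔ v, oc (u ⊔ v), ⊤} (oc u ⊓ (u ⊔ v)) = u ⊔ v ∧
    das {⊥, u ⊔ v, oc (u ⊔ v), ⊤} (u ⊓ (oc u ⊓ (u ⊔ v))) = ⊥ ∧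
    das {⊥, u ⊔ v, oc (u ⊔ v), ⊤} u ⊓ das {⊥, u ⊔ v, oc (u ⊔ v), ⊤} (oc u ⊓ (u ⊔ v)) ≠
      das {⊥, u ⊔ v, oc (u ⊔ v), ⊤} (u ⊓ (oc u ⊓ (u ⊔ v))) :=
  das_not_preserve_inf_example_general oc h_inf h_om u v hu hvu
end
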